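/- Let C be a regular, irreducible curve that is projective over a field k, with function field F = k(C), arithmetic genus t ≥ 1, and a k-rational point O. Let S = { P in C : H^0(C, O_C(3t(O) − (P))) ≠ {0} } and let L_{3t} be the subgroup of K₂(F) generated by symbols {l,m} with l,m nonzero elements of H^0(C, O_C(3t(O))). Then the tame symbol induces an isomorphism K₂(F) / L_{3t} ≅ ∐_{P ∉ S} k(P)^*. In particular, the tame symbol T : K₂(F) → ∐_{P ∈ C} k(P)^* and its restriction L_{3t} → ∐_{P ∈ S} k(P)^* have the same kernel, and their cokernels are isomorphic. -/

import Mathlib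

open scoped TensorProduct

noncomputable section

/-- The set of Steinberg relations in `Fˣ ⊗_ℤ Fˣ` (written additively):
the elements `a ⊗ b` with `a + b = 1` in `F`. -/
def SteinbergSet (F : Type*) [Field F] :
    Set (TensorProduct ℤ (Additive Fˣ) (Additive Fˣ)) :=
  { x | ∃ a b : Fˣ, (a : F) + (b : F) = 1 ∧
      x = Additive.ofMul a ⊗ₜ[ℤ] Additive.ofMul b }

/-- Milnor's `K₂` of a field, via Matsumoto's presentation. -/
abbrev K2 (F : Type*) [Field F] :=
  (TensorProduct ℤ (Additive Fˣ) (Additive Fˣ)) ⧸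
    Submodule.span ℤ (SteinbergSet F)

/-- The symbol `{f, g}` in `K₂(F)`. -/
def symbol {F : Type*} [Field F] (f g : Fˣ) : K2 F :=
  Submodule.Quotient.mk (Additive.ofMul f ⊗ₜ[ℤ] Additive.ofMul g)

/-- The degree of a divisor `D` on the curve: `∑_P deg(P) · D(P)`,
where `deg P = [k(P) : k]`. -/
def divDeg (k : Type*) [Field k] {Pt : Type*} (res : Pt → Type*)
    [∀ P, Field (res P)] [∀ P, Algebra k (res P)] (D : Pt →₀ ℤ) : ℤ :=
  ∑ᶠ P, (Module.finrank k (res P) : ℤ) * D P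

/-- Axioms for a regular, irreducible curve `C`, projective over a field `k`, with
`H⁰(C, O_C) = k`, presented through: its function field `F = k(C)`, its set `Pt` of
closed points, the residue fields `res P = k(P)`, the normalized valuations `ord P`,
the evaluation maps `ev P` (evaluation at `P` of functions regular at `P`), the
Riemann-Roch spaces `L D = H⁰(C, O_C(D))`, and the arithmetic genus
`t = dim_k H¹(C, O_C)`, characterized by the Riemann-Roch relations. -/
structure IsProjCurve (k F : Type*) [Field k] [Field F] [Algebra k F]
    {Pt : Type*} (res : Pt → Type*) [∀ P, Field (res P)] [∀ P, Algebra k (res P)]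
    (ord : Pt → F → ℤ) (ev : ∀ P, F → res P)
    (L : (Pt →₀ ℤ) → Submodule k F) (t : ℕ) : Prop where
  finiteDimensional_res : ∀ P, FiniteDimensional k (res P)
  ord_mul : ∀ P (f g : F), f ≠ 0 → g ≠ 0 → ord P (f * g) = ord P f + ord P g
  ord_add : ∀ P (f g : F), f ≠ 0 → g ≠ 0 → f + g ≠ 0 →
      min (ord P f) (ord P g) ≤ ord P (f + g)
  ord_algebraMap : ∀ P (c : k), c ≠ 0 → ord P (algebraMap k F c) = 0
  ord_uniformizer : ∀ P, ∃ f : F, f ≠ 0 ∧ ord P f = 1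
  ord_separates : ∀ P Q, (∀ f : F, ord P f = ord Q f) → P = Q
  support_finite : ∀ f : F, f ≠ 0 → {P | ord P f ≠ 0}.Finite
  degree_formula : ∀ f : F, f ≠ 0 →
      ∑ᶠ P, (Module.finrank k (res P) : ℤ) * ord P f = 0
  ev_zero : ∀ P, ev P 0 = 0
  ev_one : ∀ P, ev P 1 = 1
  ev_add : ∀ P (f g : F), f ≠ 0 → g ≠ 0 → 0 ≤ ord P f → 0 ≤ ord P g →
      ev P (f + g) = ev P f + ev P g
  ev_mul : ∀ P (f g : F), f ≠ 0 → g ≠ 0 → 0 ≤ ord P f → 0 ≤ ord P g →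
      ev P (f * g) = ev P f * ev P g
  ev_algebraMap : ∀ P (c : k), ev P (algebraMap k F c) = algebraMap k (res P) c
  ev_eq_zero_iff : ∀ P (f : F), f ≠ 0 → 0 ≤ ord P f → (ev P f = 0 ↔ 0 < ord P f)
  ev_surjective : ∀ P (y : res P), ∃ f : F, f ≠ 0 ∧ 0 ≤ ord P f ∧ ev P f = y
  mem_L : ∀ (D : Pt →₀ ℤ) (f : F), f ∈ L D ↔ (f ≠ 0 → ∀ P, 0 ≤ D P + ord P f)
  finiteDimensional_L : ∀ D, FiniteDimensional k (L D)
  global_sections : ∀ f : F, f ∈ L 0 ↔ ∃ c : k, algebraMap k F c = f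
  rr_ineq : ∀ D : Pt →₀ ℤ,
      divDeg k res D + 1 - t ≤ (Module.finrank k (L D) : ℤ)
  rr_eq : ∀ D : Pt →₀ ℤ, 2 * (t : ℤ) - 2 < divDeg k res D →
      (Module.finrank k (L D) : ℤ) = divDeg k res D + 1 - t

/-- `T` is the tame symbol `K₂(F) → ∐_{P} k(P)^*`: it is determined by
`T_P({f,g}) = (-1)^{ord_P(f)·ord_P(g)} (f^{ord_P(g)} / g^{ord_P(f)})(P)`. -/
def IsTameSymbol {F : Type*} [Field F] {Pt : Type*} {res : Pt → Type*}
    [∀ P, Field (res P)]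
    (ord : Pt → F → ℤ) (ev : ∀ P, F → res P)
    (T : K2 F →+ Π₀ P : Pt, Additive ((res P)ˣ)) : Prop :=
  ∀ (f g : Fˣ) (P : Pt),
    ((Additive.toMul (T (symbol f g) P) : (res P)ˣ) : res P) =
      ev P (((-1 : Fˣ) ^ (ord P (f : F) * ord P (g : F)) *
        f ^ (ord P (g : F)) * g ^ (-ord P (f : F)) : Fˣ) : F)

/-- `L_d`: the subgroup of `K₂(F)` generated by the symbols `{l, m}` with `l, m`
nonzero elements of the Riemann-Roch space `H⁰(C, O_C(d(O)))`. -/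
def Lsub {k F : Type*} [Field k] [Field F] [Algebra k F] {Pt : Type*}
    (L : (Pt →₀ ℤ) → Submodule k F) (O : Pt) (d : ℤ) : AddSubgroup (K2 F) :=
  AddSubgroup.closure
    { x | ∃ l m : Fˣ, (l : F) ∈ L (Finsupp.single O d) ∧
        (m : F) ∈ L (Finsupp.single O d) ∧ x = symbol l m }

section Symbol

variable {F : Type*} [Field F]

theorem symbol_mul_left (a b c : Fˣ) : symbol (a * b) c = symbol a c + symbol b c := by
  simp only [symbol, ofMul_mul, TensorProduct.add_tmul, Submodule.Quotient.mk_add]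

theorem symbol_mul_right (a b c : Fˣ) : symbol a (b * c) = symbol a b + symbol a c := by
  simp only [symbol, ofMul_mul, TensorProduct.tmul_add, Submodule.Quotient.mk_add]

theorem symbol_one_left (a : Fˣ) : symbol 1 a = 0 := by
  have h := symbol_mul_left 1 1 a
  rw [mul_one] at h
  exact left_eq_add.mp h

theorem symbol_one_right (a : Fˣ) : symbol a 1 = 0 := by
  have h := symbol_mul_right a 1 1
  rw [mul_one] at h
  exact left_eq_add.mp h

theorem symbol_inv_left (a b : Fˣ) : symbol a⁻¹ b = -symbol a b := by
  have h := symbol_mul_left a⁻¹ a b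
  rw [inv_mul_cancel, symbol_one_left] at h
  exact eq_neg_of_add_eq_zero_left h.symm

theorem symbol_inv_right (a b : Fˣ) : symbol a b⁻¹ = -symbol a b := by
  have h := symbol_mul_right a b⁻¹ b
  rw [inv_mul_cancel, symbol_one_right] at h
  exact eq_neg_of_add_eq_zero_left h.symm

/-- The Steinberg relation. -/
theorem symbol_eq_zero_of_add_eq_one {a b : Fˣ} (h : (a : F) + b = 1) : symbol a b = 0 :=
  (Submodule.Quotient.mk_eq_zero _).mpr (Submodule.subset_span ⟨a, b, h, rfl⟩)

theorem symbol_neg_self (a : Fˣ) : symbol a (-a) = 0 := by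
  by_cases ha : a = 1
  · rw [ha, symbol_one_left]
  have ha' : (a : F) ≠ 1 := fun h => ha (Units.ext h)
  have ha0 : (a : F) ≠ 0 := a.ne_zero
  have h1 : 1 - (a : F) ≠ 0 := sub_ne_zero.mpr ha'.symm
  have h2 : 1 - (a : F)⁻¹ ≠ 0 := by
    rw [sub_ne_zero]
    intro h
    exact ha' (inv_eq_one.mp h.symm)
  have key : -a = Units.mk0 _ h1 * (Units.mk0 _ h2)⁻¹ := by
    rw [eq_mul_inv_iff_mul_eq]
    ext
    simp only [Units.val_mul, Units.val_neg, Units.val_mk0]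
    field_simp
    ring
  have e1 : symbol a (Units.mk0 _ h1) = 0 := symbol_eq_zero_of_add_eq_one (by simp)
  have e2 : symbol a⁻¹ (Units.mk0 _ h2) = 0 := symbol_eq_zero_of_add_eq_one (by simp)
  rw [symbol_inv_left, neg_eq_zero] at e2
  rw [key, symbol_mul_right, symbol_inv_right, e1, e2, neg_zero, add_zero]

theorem symbol_self (a : Fˣ) : symbol a a = -symbol a (-1) := by
  have h := symbol_neg_self a
  rw [neg_eq_neg_one_mul, symbol_mul_right] at h
  exact eq_neg_of_add_eq_zero_right h

theorem symbol_swap (a b : Fˣ) : symbol a b = -symbol b a := by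
  have h := symbol_neg_self (a * b)
  have ha := symbol_neg_self a
  have hb := symbol_neg_self b
  have e1 : -(a * b) = -a * b := by simp
  have e2 : symbol b (-a * b) = symbol b a + symbol b (-b) := by
    rw [← symbol_mul_right]; simp
  rw [e1, symbol_mul_left, e2, symbol_mul_right, ha, hb, zero_add, add_zero] at h
  exact eq_neg_of_add_eq_zero_left h

theorem symbol_mem_of_add_eq_one {H : AddSubgroup (K2 F)} {r a p q : Fˣ}
    (hra : symbol r a ∈ H) (hrq : symbol r q ∈ H) (hpa : symbol p a ∈ H)
    (h : ((r * p : Fˣ) : F) + ((a * q : Fˣ) : F) = 1) : symbol p q ∈ H := by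
  have hst := symbol_eq_zero_of_add_eq_one h
  rw [symbol_mul_left, symbol_mul_right, symbol_mul_right, ← add_assoc] at hst
  rw [eq_neg_of_add_eq_zero_right hst]
  exact neg_mem (add_mem (add_mem hra hrq) hpa)

end Symbol

/-- A map defined on a set `V` of representatives of fractions in `K` extends to a homomorphism
on `K` as soon as it respects relations `v * w = u * z` with `v, u` in a subset `W` that is
large enough. -/
theorem exists_addMonoidHom_of_fractions {X K A : Type*} [CommGroup K] [AddCommGroup A]
    {V W : Set X} (hWV : W ⊆ V) (e : X → K) (φ : X → A)
    (hφ : ∀ v ∈ W, ∀ u ∈ W, ∀ w ∈ V, ∀ z ∈ V, e v * e w = e u * e z → φ v + φ w = φ u + φ z)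
    (hW : ∀ y : K, ∃ b ∈ W, ∃ a ∈ W, e a = y * e b)
    (hV : ∀ y z : K, ∃ b ∈ W, ∃ a ∈ V, ∃ c ∈ V, e a = y * e b ∧ e c = z * e b) :
    ∃ ψ : Additive K →+ A, ∀ v ∈ V, ∀ w ∈ V, ∀ y, e v = y * e w →
      ψ (Additive.ofMul y) = φ v - φ w := by
  choose b hb a ha hab using hW
  have main : ∀ v ∈ V, ∀ w ∈ V, ∀ y, e v = y * e w → φ (a y) - φ (b y) = φ v - φ w := by
    intro v hv w hw y h
    have := hφ (b y) (hb y) (a y) (ha y) v hv w hw (by rw [h, hab]; ac_rfl)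
    rw [sub_eq_sub_iff_add_eq_add, ← this, add_comm]
  refine ⟨AddMonoidHom.mk' (fun y => φ (a y.toMul) - φ (b y.toMul)) ?_, main⟩
  intro y z
  obtain ⟨q, hq, p, hp, r, hr, h1, h2⟩ := hV y.toMul z.toMul⁻¹
  have h3 : e q = z.toMul * e r := by rw [h2, mul_inv_cancel_left]
  have h4 : e p = (y + z).toMul * e r := by rw [toMul_add, mul_assoc, ← h3, h1]
  rw [main p hp q (hWV hq) _ h1, main q (hWV hq) r hr _ h3, main p hp r hr _ h4]
  abel

/-- Subspaces of a field whose codimensions add up to less than the degree have, after scaling,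
a common nonzero element. -/
theorem Submodule.exists_mem_mul_mem {k K : Type*} [Field k] [Field K] [Algebra k K]
    [FiniteDimensional k K] (W V V' : Submodule k K) {y z : K} (hy : y ≠ 0) (hz : z ≠ 0)
    (h : 2 * Module.finrank k K <
      Module.finrank k W + Module.finrank k V + Module.finrank k V') :
    ∃ b ∈ W, b ≠ 0 ∧ y * b ∈ V ∧ z * b ∈ V' := by
  have inter : ∀ A B : Submodule k K, Module.finrank k A + Module.finrank k B ≤
      Module.finrank k (A ⊓ B : Submodule k K) + Module.finrank k K := by
    intro A B
    rw [← Submodule.finrank_sup_add_finrank_inf_eq A B, add_comm]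
    exact Nat.add_le_add_left (Submodule.finrank_le _) _
  have scale : ∀ (A : Submodule k K) {x : K}, x ≠ 0 →
      Module.finrank k (A.comap (LinearMap.mulLeft k x)) = Module.finrank k A := by
    intro A x hx
    let m : K ≃ₗ[k] K := LinearEquiv.ofBijective (LinearMap.mulLeft k x)
      ⟨mul_right_injective₀ hx, mul_left_surjective₀ hx⟩
    have : A.comap (LinearMap.mulLeft k x) = A.map m.symm.toLinearMap :=
      (Submodule.map_equiv_eq_comap_symm m.symm A).symm
    rw [this]
    exact LinearEquiv.finrank_map_eq m.symm A
  have h1 := inter W (V.comap (LinearMap.mulLeft k y))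
  have h2 := inter (W ⊓ V.comap (LinearMap.mulLeft k y)) (V'.comap (LinearMap.mulLeft k z))
  rw [scale V hy] at h1
  rw [scale V' hz] at h2
  have h3 : (W ⊓ V.comap (LinearMap.mulLeft k y)) ⊓ V'.comap (LinearMap.mulLeft k z) ≠ ⊥ := by
    intro h0
    rw [h0, finrank_bot] at h2
    omega
  obtain ⟨b, ⟨⟨hb1, hb2⟩, hb3⟩, hb0⟩ := Submodule.exists_mem_ne_zero_of_ne_bot h3
  exact ⟨b, hb1, hb0, hb2, hb3⟩

/-- The closed points `P` with `H⁰(C, O_C(d(O) - (P))) ≠ 0`. -/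
def sectionZeros {k F : Type*} [Field k] [Field F] [Algebra k F] {Pt : Type*}
    (L : (Pt →₀ ℤ) → Submodule k F) (O : Pt) (d : ℤ) : Set Pt :=
  {P | L (Finsupp.single O d - Finsupp.single P 1) ≠ ⊥}

/-- The subgroup of `Fˣ` generated by the nonzero elements of `H⁰(C, O_C(d(O)))`. -/
def sectionGroup {k F : Type*} [Field k] [Field F] [Algebra k F] {Pt : Type*}
    (L : (Pt →₀ ℤ) → Submodule k F) (O : Pt) (d : ℤ) : Subgroup Fˣ :=
  Subgroup.closure {u | (u : F) ∈ L (Finsupp.single O d)}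

/-- The value at `P` of a unit, replaced by `1` if it vanishes. -/
def evUnit {F : Type*} [Field F] {Pt : Type*} {res : Pt → Type*} [∀ P, Field (res P)]
    (ev : ∀ P, F → res P) (P : Pt) (u : Fˣ) : (res P)ˣ :=
  open Classical in if h : ev P u = 0 then 1 else Units.mk0 _ h

section Degree

variable {k : Type*} [Field k] {Pt : Type*} {res : Pt → Type*}
  [∀ P, Field (res P)] [∀ P, Algebra k (res P)]

theorem divDeg_eq_sum (D : Pt →₀ ℤ) :
    divDeg k res D = D.sum fun P n => (Module.finrank k (res P) : ℤ) * n := by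
  refine finsum_eq_finsetSum_of_support_subset _ fun P hP => ?_
  simp only [Function.mem_support, ne_eq, mul_eq_zero, not_or] at hP
  simpa using hP.2

theorem divDeg_add (D E : Pt →₀ ℤ) :
    divDeg k res (D + E) = divDeg k res D + divDeg k res E := by
  simp only [divDeg_eq_sum]
  exact Finsupp.sum_add_index' (fun _ => mul_zero _) fun _ _ _ => mul_add _ _ _

theorem divDeg_sub (D E : Pt →₀ ℤ) :
    divDeg k res (D - E) = divDeg k res D - divDeg k res E := by
  rw [eq_sub_iff_add_eq, ← divDeg_add, sub_add_cancel]

theorem divDeg_single (P : Pt) (n : ℤ) :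
    divDeg k res (Finsupp.single P n) = Module.finrank k (res P) * n := by
  rw [divDeg_eq_sum]
  exact Finsupp.sum_single_index (mul_zero _)

theorem divDeg_nonneg {D : Pt →₀ ℤ} (hD : 0 ≤ D) : 0 ≤ divDeg k res D := by
  rw [divDeg_eq_sum]
  exact Finset.sum_nonneg fun P _ => mul_nonneg (Int.natCast_nonneg _) (hD P)

theorem single_le_of_pos {D : Pt →₀ ℤ} (hD : 0 ≤ D) {P : Pt} (hP : 0 < D P) :
    Finsupp.single P 1 ≤ D := by
  classical
  intro Q
  rw [Finsupp.single_apply]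
  split_ifs with h
  · rw [← h]; exact hP
  · exact hD Q

theorem finrank_le_divDeg {D : Pt →₀ ℤ} (hD : 0 ≤ D) {P : Pt} (hP : 0 < D P) :
    (Module.finrank k (res P) : ℤ) ≤ divDeg k res D := by
  have h := divDeg_nonneg (k := k) (res := res) (sub_nonneg.mpr (single_le_of_pos hD hP))
  rw [divDeg_sub, divDeg_single] at h
  linarith

/-- An effective divisor of degree larger than `t` supported in points of degree at most `t`
contains a divisor with degree in `[t + 1, 2 t]`. -/
theorem exists_le_divDeg_mem_Icc (t : ℕ) (hpos : ∀ P, 0 < Module.finrank k (res P)) :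
    ∀ (n : ℕ) (D : Pt →₀ ℤ), 0 ≤ D → divDeg k res D ≤ n → (t : ℤ) + 1 ≤ divDeg k res D →
      (∀ P, 0 < D P → Module.finrank k (res P) ≤ t) →
      ∃ E, 0 ≤ E ∧ E ≤ D ∧ (t : ℤ) + 1 ≤ divDeg k res E ∧ divDeg k res E ≤ 2 * t := by
  intro n
  induction n with
  | zero => intro D _ h1 h2; push_cast at h1; omega
  | succ n ih =>
    intro D hD hn ht hsupp
    by_cases h : divDeg k res D ≤ 2 * t
    · exact ⟨D, hD, le_rfl, ht, h⟩
    have : ∃ P, 0 < D P := by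
      by_contra! hneg
      have h0 : D = 0 := by
        ext P
        exact le_antisymm (hneg P) (hD P)
      rw [h0] at ht
      have : divDeg k res (0 : Pt →₀ ℤ) = 0 := by simp [divDeg]
      omega
    obtain ⟨P, hP⟩ := this
    have h1 := hsupp P hP
    have h2 := hpos P
    have hle : D - Finsupp.single P 1 ≤ D := by
      rw [sub_le_self_iff, Finsupp.single_nonneg]
      exact zero_le_one
    have hdeg : divDeg k res (D - Finsupp.single P 1) =
        divDeg k res D - Module.finrank k (res P) := by
      rw [divDeg_sub, divDeg_single, mul_one]
    obtain ⟨E, hE0, hE, hE1, hE2⟩ := ih (D - Finsupp.single P 1)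
      (sub_nonneg.mpr (single_le_of_pos hD hP)) (by rw [hdeg]; push_cast at hn; omega)
      (by rw [hdeg]; omega) fun Q hQ => hsupp Q (hQ.trans_le (hle Q))
    exact ⟨E, hE0, hE.trans hle, hE1, hE2⟩

end Degree

namespace IsProjCurve

variable {k F : Type*} [Field k] [Field F] [Algebra k F]
  {Pt : Type*} {res : Pt → Type*} [∀ P, Field (res P)] [∀ P, Algebra k (res P)]
  {ord : Pt → F → ℤ} {ev : ∀ P, F → res P}
  {L : (Pt →₀ ℤ) → Submodule k F} {t : ℕ}

theorem ord_units_mul (hC : IsProjCurve k F res ord ev L t) (P : Pt) (u v : Fˣ) :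
    ord P ((u * v : Fˣ) : F) = ord P u + ord P v :=
  hC.ord_mul P u v u.ne_zero v.ne_zero

theorem ord_units_one (hC : IsProjCurve k F res ord ev L t) (P : Pt) :
    ord P ((1 : Fˣ) : F) = 0 := by
  have h := hC.ord_units_mul P 1 1
  rw [mul_one] at h
  omega

theorem ord_units_inv (hC : IsProjCurve k F res ord ev L t) (P : Pt) (u : Fˣ) :
    ord P ((u⁻¹ : Fˣ) : F) = -ord P u := by
  have h := hC.ord_units_mul P u⁻¹ u
  rw [inv_mul_cancel, hC.ord_units_one] at h
  omega

theorem units_mem_L (hC : IsProjCurve k F res ord ev L t) {D : Pt →₀ ℤ} {u : Fˣ} :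
    (u : F) ∈ L D ↔ ∀ P, 0 ≤ D P + ord P u := by
  rw [hC.mem_L]
  exact ⟨fun h => h u.ne_zero, fun h _ => h⟩

theorem exists_unit_mem_L {D : Pt →₀ ℤ} (h : L D ≠ ⊥) : ∃ u : Fˣ, (u : F) ∈ L D := by
  obtain ⟨f, hf, hf0⟩ := Submodule.exists_mem_ne_zero_of_ne_bot h
  exact ⟨Units.mk0 f hf0, hf⟩

theorem L_ne_bot {D : Pt →₀ ℤ} {u : Fˣ} (h : (u : F) ∈ L D) : L D ≠ ⊥ := by
  intro h0
  rw [h0, Submodule.mem_bot] at h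
  exact u.ne_zero h

theorem L_mono (hC : IsProjCurve k F res ord ev L t) {D E : Pt →₀ ℤ} (h : D ≤ E) :
    L D ≤ L E := by
  intro f hf
  rw [hC.mem_L] at hf ⊢
  intro h0 P
  have h1 := hf h0 P
  have h2 := h P
  omega

theorem L_ne_bot_of_le_divDeg (hC : IsProjCurve k F res ord ev L t) {D : Pt →₀ ℤ}
    (h : (t : ℤ) ≤ divDeg k res D) : L D ≠ ⊥ := by
  intro h0
  have h1 := hC.rr_ineq D
  rw [h0, finrank_bot] at h1
  push_cast at h1
  omega

theorem finrank_res_pos (hC : IsProjCurve k F res ord ev L t) (P : Pt) :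
    0 < Module.finrank k (res P) :=
  have := hC.finiteDimensional_res P
  Module.finrank_pos

/-- Every nonzero function has a divisor, of degree zero. -/
theorem exists_divisor (hC : IsProjCurve k F res ord ev L t) (u : Fˣ) :
    ∃ D : Pt →₀ ℤ, (∀ P, D P = ord P u) ∧ divDeg k res D = 0 :=
  ⟨Finsupp.ofSupportFinite _ (hC.support_finite u u.ne_zero), fun _ => rfl,
    hC.degree_formula u u.ne_zero⟩

theorem mem_L_sub_single (hC : IsProjCurve k F res ord ev L t) {D : Pt →₀ ℤ} {u : Fˣ}
    (hu : (u : F) ∈ L D) {P : Pt} (hP : 0 < D P + ord P u) :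
    (u : F) ∈ L (D - Finsupp.single P 1) := by
  classical
  rw [hC.units_mem_L] at hu ⊢
  intro Q
  rw [Finsupp.sub_apply, Finsupp.single_apply]
  split_ifs with h
  · rw [← h]; omega
  · have := hu Q; omega

theorem ev_units_ne_zero (hC : IsProjCurve k F res ord ev L t) {P : Pt} {u : Fˣ}
    (hu : ord P u = 0) : ev P u ≠ 0 := by
  rw [ne_eq, hC.ev_eq_zero_iff P u u.ne_zero hu.ge, hu]
  exact lt_irrefl _

theorem val_evUnit (hC : IsProjCurve k F res ord ev L t) {P : Pt} {u : Fˣ}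
    (hu : ord P u = 0) : (evUnit ev P u : res P) = ev P u := by
  rw [evUnit, dif_neg (hC.ev_units_ne_zero hu), Units.val_mk0]

theorem evUnit_mul (hC : IsProjCurve k F res ord ev L t) {P : Pt} {u v : Fˣ}
    (hu : ord P u = 0) (hv : ord P v = 0) :
    evUnit ev P (u * v) = evUnit ev P u * evUnit ev P v := by
  ext
  rw [Units.val_mul, hC.val_evUnit hu, hC.val_evUnit hv,
    hC.val_evUnit (by rw [hC.ord_units_mul, hu, hv, add_zero]), Units.val_mul,
    hC.ev_mul P u v u.ne_zero v.ne_zero hu.ge hv.ge]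

theorem evUnit_one (hC : IsProjCurve k F res ord ev L t) (P : Pt) :
    evUnit ev P (1 : Fˣ) = 1 := by
  ext
  rw [hC.val_evUnit (hC.ord_units_one P), Units.val_one, Units.val_one, hC.ev_one]

theorem evUnit_inv (hC : IsProjCurve k F res ord ev L t) {P : Pt} {u : Fˣ}
    (hu : ord P u = 0) : evUnit ev P u⁻¹ = (evUnit ev P u)⁻¹ := by
  rw [eq_inv_iff_mul_eq_one, ← hC.evUnit_mul (by rw [hC.ord_units_inv, hu, neg_zero]) hu,
    inv_mul_cancel, hC.evUnit_one]

theorem ev_add_of_mem_L (hC : IsProjCurve k F res ord ev L t) {D : Pt →₀ ℤ} {P : Pt}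
    (hP : D P = 0) {f g : F} (hf : f ∈ L D) (hg : g ∈ L D) :
    ev P (f + g) = ev P f + ev P g := by
  by_cases hf0 : f = 0
  · rw [hf0, zero_add, hC.ev_zero, zero_add]
  by_cases hg0 : g = 0
  · rw [hg0, add_zero, hC.ev_zero, add_zero]
  have h1 := (hC.mem_L _ _).mp hf hf0 P
  have h2 := (hC.mem_L _ _).mp hg hg0 P
  rw [hP, zero_add] at h1 h2
  exact hC.ev_add P f g hf0 hg0 h1 h2

/-- Evaluation at `P` as a linear map on a Riemann-Roch space. -/
def evalLin (hC : IsProjCurve k F res ord ev L t) (D : Pt →₀ ℤ) (P : Pt) (hP : D P = 0) :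
    L D →ₗ[k] res P where
  toFun f := ev P f
  map_add' f g := hC.ev_add_of_mem_L hP f.2 g.2
  map_smul' c f := by
    rw [Submodule.coe_smul, Algebra.smul_def, RingHom.id_apply, Algebra.smul_def,
      ← hC.ev_algebraMap]
    by_cases hc : c = 0
    · simp [hc, hC.ev_zero]
    by_cases hf : (f : F) = 0
    · simp [hf, hC.ev_zero]
    have h1 := (hC.mem_L _ _).mp f.2 hf P
    rw [hP, zero_add] at h1
    exact hC.ev_mul P _ _ (by simpa using hc) hf (hC.ord_algebraMap P c hc).ge h1

theorem evalLin_injective (hC : IsProjCurve k F res ord ev L t) {D : Pt →₀ ℤ} {P : Pt}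
    (hP : D P = 0) (h : L (D - Finsupp.single P 1) = ⊥) :
    Function.Injective (hC.evalLin D P hP) := by
  rw [← LinearMap.ker_eq_bot, LinearMap.ker_eq_bot']
  intro f hf
  by_contra hf0
  have hf0' : (f : F) ≠ 0 := fun h => hf0 (Subtype.ext h)
  have h1 := (hC.mem_L _ _).mp f.2 hf0' P
  rw [hP, zero_add] at h1
  have h2 : 0 < ord P f := (hC.ev_eq_zero_iff P f hf0' h1).mp hf
  exact L_ne_bot (hC.mem_L_sub_single (u := Units.mk0 _ hf0') f.2
    (by rw [hP, zero_add]; exact h2)) h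

theorem algebraMap_res_surjective {O : Pt}
    (hO : Module.finrank k (res O) = 1) (y : res O) : ∃ c : k, algebraMap k (res O) c = y := by
  obtain ⟨c, hc⟩ := (finrank_eq_one_iff_of_nonzero' (1 : res O) one_ne_zero).mp hO y
  exact ⟨c, by rw [← hc, Algebra.smul_def, mul_one]⟩

/-- Two functions of the same order at the rational point `O` differ, up to a constant factor,
by a function of larger order. -/
theorem exists_sub_smul_mem_L (hC : IsProjCurve k F res ord ev L t) {O : Pt}
    (hO : Module.finrank k (res O) = 1) {D : Pt →₀ ℤ} {l m : Fˣ} (hl : (l : F) ∈ L D)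
    (hm : (m : F) ∈ L D) (hlm : ord O l = ord O m) :
    ∃ c : k, c ≠ 0 ∧ (l : F) - algebraMap k F c * m ∈ L (D - Finsupp.single O 1) := by
  have hf : ord O ((l * m⁻¹ : Fˣ) : F) = 0 := by
    rw [hC.ord_units_mul, hC.ord_units_inv, hlm, add_neg_cancel]
  obtain ⟨c, hc⟩ := algebraMap_res_surjective hO (ev O ((l * m⁻¹ : Fˣ) : F))
  have hc0 : c ≠ 0 := by
    rintro rfl
    rw [map_zero] at hc
    exact hC.ev_units_ne_zero hf hc.symm
  refine ⟨c, hc0, ?_⟩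
  by_cases hg : (l : F) - algebraMap k F c * m = 0
  · rw [hg]
    exact zero_mem _
  have hmem : (l : F) - algebraMap k F c * m ∈ L D := by
    rw [← Algebra.smul_def]
    exact sub_mem hl (Submodule.smul_mem _ _ hm)
  have hgm : (l : F) - algebraMap k F c * m =
      (((l * m⁻¹ : Fˣ) : F) + algebraMap k F (-c)) * m := by
    rw [Units.val_mul, add_mul, Units.inv_mul_cancel_right, map_neg]
    ring
  have hh : ((l * m⁻¹ : Fˣ) : F) + algebraMap k F (-c) ≠ 0 := by
    intro h
    rw [h, zero_mul] at hgm
    exact hg hgm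
  have hc' : algebraMap k F (-c) ≠ 0 := by simpa using hc0
  have hcord : ord O (algebraMap k F (-c)) = 0 := hC.ord_algebraMap O _ (neg_ne_zero.mpr hc0)
  have h1 := hC.ord_add O _ _ (Units.ne_zero _) hc' hh
  rw [hf, hcord, min_self] at h1
  have h2 : ev O (((l * m⁻¹ : Fˣ) : F) + algebraMap k F (-c)) = 0 := by
    rw [hC.ev_add O _ _ (Units.ne_zero _) hc' hf.ge hcord.ge, hC.ev_algebraMap, ← hc, map_neg,
      add_neg_cancel]
  have h3 := (hC.ev_eq_zero_iff O _ hh h1).mp h2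
  refine hC.mem_L_sub_single (u := Units.mk0 _ hg) hmem ?_
  have h4 := hC.units_mem_L.mp hm O
  rw [Units.val_mk0, hgm, hC.ord_mul O _ _ hh m.ne_zero]
  omega

variable {O : Pt} {d : ℤ}

theorem algebraMap_mem_L_single (hC : IsProjCurve k F res ord ev L t) (hd : 0 ≤ d) (c : k) :
    algebraMap k F c ∈ L (Finsupp.single O d) :=
  hC.L_mono (Finsupp.single_nonneg.mpr hd) ((hC.global_sections _).mpr ⟨c, rfl⟩)

theorem L_single_mono (hC : IsProjCurve k F res ord ev L t) {e : ℤ} (h : d ≤ e) :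
    L (Finsupp.single O d) ≤ L (Finsupp.single O e) :=
  hC.L_mono (Finsupp.single_le_single.mpr h)

theorem sectionZeros_mono (hC : IsProjCurve k F res ord ev L t) {e : ℤ} (h : d ≤ e) :
    sectionZeros L O d ⊆ sectionZeros L O e := by
  intro P hP
  obtain ⟨u, hu⟩ := exists_unit_mem_L hP
  exact L_ne_bot (hC.L_mono (sub_le_sub_right (Finsupp.single_le_single.mpr h) _) hu)

theorem mem_sectionZeros (hC : IsProjCurve k F res ord ev L t)
    (hO : Module.finrank k (res O) = 1) {P : Pt} (h : Module.finrank k (res P) + t ≤ d) :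
    P ∈ sectionZeros L O d := by
  refine hC.L_ne_bot_of_le_divDeg ?_
  rw [divDeg_sub, divDeg_single, divDeg_single, hO]
  push_cast
  linarith

theorem ne_of_notMem_sectionZeros (hC : IsProjCurve k F res ord ev L t)
    (hO : Module.finrank k (res O) = 1) (hd : (t : ℤ) + 1 ≤ d) {P : Pt}
    (hP : P ∉ sectionZeros L O d) : O ≠ P := by
  rintro rfl
  exact hP (hC.mem_sectionZeros hO (by rw [hO]; push_cast; linarith))

theorem ord_eq_zero_of_mem_sectionGroup (hC : IsProjCurve k F res ord ev L t)
    (hO : Module.finrank k (res O) = 1) (hd : (t : ℤ) + 1 ≤ d) {P : Pt}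
    (hP : P ∉ sectionZeros L O d) {u : Fˣ} (hu : u ∈ sectionGroup L O d) : ord P u = 0 := by
  induction hu using Subgroup.closure_induction with
  | mem u hu =>
    have h0 : Finsupp.single O d P = 0 :=
      Finsupp.single_eq_of_ne' (hC.ne_of_notMem_sectionZeros hO hd hP)
    have h1 := hC.units_mem_L.mp hu P
    rw [h0, zero_add] at h1
    refine le_antisymm (not_lt.mp fun h => hP ?_) h1
    exact L_ne_bot (hC.mem_L_sub_single hu (by rw [h0, zero_add]; exact h))
  | one => exact hC.ord_units_one P
  | mul u v _ _ h1 h2 => rw [hC.ord_units_mul, h1, h2, add_zero]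
  | inv u _ h => rw [hC.ord_units_inv, h, neg_zero]

theorem symbol_mem_Lsub {a b : Fˣ} (ha : a ∈ sectionGroup L O d) (hb : b ∈ sectionGroup L O d) :
    symbol a b ∈ Lsub L O d := by
  induction ha using Subgroup.closure_induction with
  | mem a ha =>
    induction hb using Subgroup.closure_induction with
    | mem b hb => exact AddSubgroup.subset_closure ⟨a, b, ha, hb, rfl⟩
    | one => rw [symbol_one_right]; exact zero_mem _
    | mul b c _ _ h1 h2 => rw [symbol_mul_right]; exact add_mem h1 h2
    | inv b _ h => rw [symbol_inv_right]; exact neg_mem h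
  | one => rw [symbol_one_left]; exact zero_mem _
  | mul a c _ _ h1 h2 => rw [symbol_mul_left]; exact add_mem h1 h2
  | inv a _ h => rw [symbol_inv_left]; exact neg_mem h

theorem sectionGroup_mono (hC : IsProjCurve k F res ord ev L t) {e : ℤ} (h : d ≤ e) :
    sectionGroup L O d ≤ sectionGroup L O e :=
  Subgroup.closure_mono fun _ hu => hC.L_single_mono h hu

theorem Lsub_mono (hC : IsProjCurve k F res ord ev L t) {e : ℤ} (h : d ≤ e) :
    Lsub L O d ≤ Lsub L O e := by
  refine AddSubgroup.closure_mono ?_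
  rintro _ ⟨l, m, hl, hm, rfl⟩
  exact ⟨l, m, hC.L_single_mono h hl, hC.L_single_mono h hm, rfl⟩

/-- The divisor of a section of `(d + 1)(O)` that vanishes at a point `P` at which no section of
`d(O)` vanishes. -/
theorem exists_residual_divisor (hC : IsProjCurve k F res ord ev L t)
    (hO : Module.finrank k (res O) = 1) (hd : 3 * (t : ℤ) ≤ d) {P : Pt}
    (hP : P ∉ sectionZeros L O d) {l : Fˣ}
    (hl : (l : F) ∈ L (Finsupp.single O (d + 1) - Finsupp.single P 1)) :
    ∃ E : Pt →₀ ℤ, 0 ≤ E ∧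
      (∀ Q, ord Q l = Finsupp.single P 1 Q + E Q - Finsupp.single O (d + 1) Q) ∧
      divDeg k res E = d + 1 - Module.finrank k (res P) ∧
      (∀ Q ∉ sectionZeros L O d, E Q = 0) ∧ E O = 0 := by
  obtain ⟨D, hD, hdeg⟩ := hC.exists_divisor l
  have hPdeg : d < Module.finrank k (res P) + t :=
    not_le.mp fun h => hP (hC.mem_sectionZeros hO h)
  have hE0 : 0 ≤ D + Finsupp.single O (d + 1) - Finsupp.single P 1 := by
    intro Q
    have := hC.units_mem_L.mp hl Q
    simp only [Finsupp.sub_apply, Finsupp.add_apply, Finsupp.zero_apply, hD] at this ⊢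
    linarith
  have hEdeg : divDeg k res (D + Finsupp.single O (d + 1) - Finsupp.single P 1) =
      d + 1 - Module.finrank k (res P) := by
    rw [divDeg_sub, divDeg_add, divDeg_single, divDeg_single, hO, hdeg]
    push_cast
    ring
  refine ⟨_, hE0, fun Q => ?_, hEdeg, fun Q hQ => ?_, ?_⟩
  · simp only [Finsupp.sub_apply, Finsupp.add_apply, hD]
    ring
  · refine le_antisymm (not_lt.mp fun h => hQ (hC.mem_sectionZeros hO ?_)) (hE0 Q)
    have := finrank_le_divDeg (k := k) (res := res) hE0 h
    rw [hEdeg] at this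
    linarith
  · refine le_antisymm (not_lt.mp fun h => hP ?_) (hE0 O)
    have := hC.mem_L_sub_single hl (P := O) (by
      simp only [Finsupp.sub_apply, Finsupp.add_apply, hD] at h ⊢
      linarith)
    rw [sub_right_comm, ← Finsupp.single_sub, add_sub_cancel_right] at this
    exact L_ne_bot this

/-- A section of `(d + 1)(O)` either is a product of quotients of sections of `d(O)`, or vanishes
at a point at which no section of `d(O)` vanishes. -/
theorem mem_sectionGroup_or (hC : IsProjCurve k F res ord ev L t)
    (hO : Module.finrank k (res O) = 1) (hd : 3 * (t : ℤ) ≤ d) {l : Fˣ}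
    (hl : (l : F) ∈ L (Finsupp.single O (d + 1))) :
    l ∈ sectionGroup L O d ∨ ∃ P ∉ sectionZeros L O d,
      (l : F) ∈ L (Finsupp.single O (d + 1) - Finsupp.single P 1) := by
  obtain ⟨D, hD, hdeg⟩ := hC.exists_divisor l
  set Z := D + Finsupp.single O (d + 1) with hZ
  have hZ0 : 0 ≤ Z := by
    intro Q
    have := hC.units_mem_L.mp hl Q
    simp only [hZ, Finsupp.add_apply, Finsupp.zero_apply, hD]
    linarith
  have hZdeg : divDeg k res Z = d + 1 := by
    rw [hZ, divDeg_add, divDeg_single, hO, hdeg]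
    push_cast
    ring
  by_cases hzero : ∃ P ∉ sectionZeros L O d, 0 < Z P
  · obtain ⟨P, hP, hZP⟩ := hzero
    refine Or.inr ⟨P, hP, hC.mem_L_sub_single hl ?_⟩
    simp only [hZ, Finsupp.add_apply, hD] at hZP
    linarith
  push Not at hzero
  left
  have degSub : ∀ E : Pt →₀ ℤ, divDeg k res (Finsupp.single O d - E) = d - divDeg k res E := by
    intro E
    rw [divDeg_sub, divDeg_single, hO]
    push_cast
    ring
  have split : ∃ E, 0 ≤ E ∧ E ≤ Z ∧ L (Finsupp.single O d - E) ≠ ⊥ ∧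
      L (Finsupp.single O d - (Z - E)) ≠ ⊥ := by
    by_cases hbig : ∃ P, 0 < Z P ∧ t < Module.finrank k (res P)
    · obtain ⟨P, hZP, hPt⟩ := hbig
      refine ⟨Finsupp.single P 1, Finsupp.single_nonneg.mpr zero_le_one,
        single_le_of_pos hZ0 hZP, by_contra fun h => (hzero P h).not_gt hZP, ?_⟩
      refine hC.L_ne_bot_of_le_divDeg ?_
      rw [degSub, divDeg_sub, divDeg_single, hZdeg]
      have : (t : ℤ) < Module.finrank k (res P) := by exact_mod_cast hPt
      linarith
    · push Not at hbig
      obtain ⟨E, hE0, hEZ, h1, h2⟩ := exists_le_divDeg_mem_Icc (k := k) (res := res) t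
        hC.finrank_res_pos (d + 1).toNat Z hZ0 (by rw [hZdeg]; exact Int.self_le_toNat _)
        (by rw [hZdeg]; linarith) hbig
      refine ⟨E, hE0, hEZ, hC.L_ne_bot_of_le_divDeg ?_, hC.L_ne_bot_of_le_divDeg ?_⟩
      · rw [degSub]; linarith
      · rw [degSub, divDeg_sub, hZdeg]; linarith
  obtain ⟨E, hE0, hEZ, h1, h2⟩ := split
  obtain ⟨u, hu⟩ := exists_unit_mem_L h1
  obtain ⟨v, hv⟩ := exists_unit_mem_L h2
  have hm : ((u * v * l⁻¹ : Fˣ) : F) ∈ L (Finsupp.single O d) := by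
    classical
    rw [hC.units_mem_L] at hu hv ⊢
    intro Q
    have h3 := hu Q
    have h4 := hv Q
    rw [hC.ord_units_mul, hC.ord_units_mul, hC.ord_units_inv]
    simp only [hZ, Finsupp.sub_apply, Finsupp.add_apply, hD, Finsupp.single_apply] at h3 h4 ⊢
    split_ifs at h3 h4 ⊢ <;> linarith
  have hl' : l = (u * v * l⁻¹)⁻¹ * u * v := by group
  rw [hl']
  exact mul_mem (mul_mem (inv_mem (Subgroup.subset_closure hm))
    (Subgroup.subset_closure (hC.L_mono (sub_le_self _ hE0) hu)))
    (Subgroup.subset_closure (hC.L_mono (sub_le_self _ (sub_nonneg.mpr hEZ)) hv))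

/-- The relation among symbols `{·, l}` modulo `Lsub L O d` coming from the congruence
`v * w ≡ u * z` at `P`, where the divisor of `l` is `P + E - (d + 1)(O)`. -/
theorem symbol_mem_Lsub_of_evUnit_eq (hC : IsProjCurve k F res ord ev L t) {P : Pt}
    (hOP : O ≠ P) {E : Pt →₀ ℤ} (hE0 : 0 ≤ E) (hEP : E P = 0) {l : Fˣ}
    (hl : ∀ Q, ord Q l = Finsupp.single P 1 Q + E Q - Finsupp.single O (d + 1) Q)
    {v u w z : Fˣ} (hv : (v : F) ∈ L (Finsupp.single O d - E))
    (hu : (u : F) ∈ L (Finsupp.single O d - E)) (hw : (w : F) ∈ L (Finsupp.single O d))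
    (hz : (z : F) ∈ L (Finsupp.single O d)) (hvP : ord P v = 0) (huP : ord P u = 0)
    (hwP : ord P w = 0) (hzP : ord P z = 0)
    (h : evUnit ev P v * evUnit ev P w = evUnit ev P u * evUnit ev P z) :
    symbol (u * z * (v * w)⁻¹) l ∈ Lsub L O d := by
  classical
  by_cases h0 : ((v * w : Fˣ) : F) + ((-(u * z) : Fˣ) : F) = 0
  · have : u * z = v * w := by
      ext
      rw [Units.val_neg, ← sub_eq_add_neg, sub_eq_zero] at h0
      exact h0.symm
    rw [this, mul_inv_cancel, symbol_one_left]
    exact zero_mem _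
  set n := Units.mk0 _ h0 with hn
  have ordNeg : ∀ Q, ord Q ((-(u * z) : Fˣ) : F) = ord Q u + ord Q z := by
    intro Q
    have e : ((-(u * z) : Fˣ) : F) = algebraMap k F (-1) * ((u * z : Fˣ) : F) := by simp
    rw [e, hC.ord_mul Q _ _ (by simp) (Units.ne_zero _), hC.ord_algebraMap Q _ (by simp),
      hC.ord_units_mul, zero_add]
  have ordn : ∀ Q, min (ord Q v + ord Q w) (ord Q u + ord Q z) ≤ ord Q n := by
    intro Q
    have := hC.ord_add Q _ _ (Units.ne_zero (v * w)) (Units.ne_zero (-(u * z))) h0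
    rwa [hC.ord_units_mul, ordNeg] at this
  have hnP : 0 < ord P n := by
    have h1 := ordn P
    rw [hvP, huP, hwP, hzP, add_zero, min_self] at h1
    refine (hC.ev_eq_zero_iff P n n.ne_zero h1).mp ?_
    have e1 : ev P ((v * w : Fˣ) : F) = ev P ((u * z : Fˣ) : F) := by
      rw [← hC.val_evUnit (by rw [hC.ord_units_mul, hvP, hwP, add_zero]),
        ← hC.val_evUnit (by rw [hC.ord_units_mul, huP, hzP, add_zero]),
        hC.evUnit_mul hvP hwP, hC.evUnit_mul huP hzP, h]
    have e2 : ((-(u * z) : Fˣ) : F) = algebraMap k F (-1) * ((u * z : Fˣ) : F) := by simp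
    rw [hn, Units.val_mk0, hC.ev_add P _ _ (Units.ne_zero _) (Units.ne_zero _)
      (by rw [hC.ord_units_mul, hvP, hwP, add_zero]) (by rw [ordNeg, huP, hzP, add_zero]),
      e1, e2, hC.ev_mul P _ _ (by simp) (Units.ne_zero _)
      (hC.ord_algebraMap P _ (by simp)).ge (by rw [hC.ord_units_mul, huP, hzP, add_zero]),
      hC.ev_algebraMap, map_neg, map_one]
    ring
  have hq : ((n * l⁻¹ : Fˣ) : F) ∈ L (Finsupp.single O d) := by
    rw [hC.units_mem_L] at hv hu hw hz ⊢
    intro Q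
    have h1 := hv Q
    have h2 := hu Q
    have h3 := hw Q
    have h4 := hz Q
    have h5 := ordn Q
    rw [hC.ord_units_mul, hC.ord_units_inv, hl Q]
    by_cases hQP : Q = P
    · subst hQP
      rw [hEP, Finsupp.single_eq_same, Finsupp.single_eq_of_ne' hOP,
        Finsupp.single_eq_of_ne' hOP]
      linarith
    · rw [Finsupp.single_eq_of_ne hQP]
      simp only [Finsupp.sub_apply, Finsupp.single_apply] at h1 h2 h3 h4 ⊢
      rcases min_le_iff.mp h5 with h5 | h5 <;> split_ifs at h1 h2 h3 h4 ⊢ <;> linarith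
  have hmem : ∀ {x : Fˣ}, (x : F) ∈ L (Finsupp.single O d - E) → x ∈ sectionGroup L O d :=
    fun hx => Subgroup.subset_closure (hC.L_mono (sub_le_self _ hE0) hx)
  have hg : u * z * (v * w)⁻¹ ∈ sectionGroup L O d :=
    mul_mem (mul_mem (hmem hu) (Subgroup.subset_closure hz))
      (inv_mem (mul_mem (hmem hv) (Subgroup.subset_closure hw)))
  have hq' : n * l⁻¹ * (v * w)⁻¹ ∈ sectionGroup L O d :=
    mul_mem (Subgroup.subset_closure hq)
      (inv_mem (mul_mem (hmem hv) (Subgroup.subset_closure hw)))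
  have hst : symbol (u * z * (v * w)⁻¹) (l * (n * l⁻¹ * (v * w)⁻¹)) = 0 := by
    refine symbol_eq_zero_of_add_eq_one ?_
    have e : l * (n * l⁻¹ * (v * w)⁻¹) = n * (v * w)⁻¹ := by
      rw [← mul_assoc, ← mul_assoc, mul_comm l n, mul_inv_cancel_right]
    rw [e, Units.val_mul, Units.val_mul n, ← add_mul, hn, Units.val_mk0, Units.val_neg,
      add_comm (((v * w : Fˣ)) : F), add_neg_cancel_left, Units.mul_inv]
  rw [symbol_mul_right] at hst
  rw [eq_neg_of_add_eq_zero_left hst]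
  exact neg_mem (symbol_mem_Lsub hg hq')

/-- Every value at `P` is a quotient of values of sections, and the symbols `{·, l}` modulo
`Lsub L O d` only depend on the value at `P`. -/
theorem exists_residue_hom (hC : IsProjCurve k F res ord ev L t) (ht : 1 ≤ t)
    (hO : Module.finrank k (res O) = 1) (hd : 3 * (t : ℤ) ≤ d) {P : Pt}
    (hP : P ∉ sectionZeros L O d) {l : Fˣ}
    (hl : (l : F) ∈ L (Finsupp.single O (d + 1) - Finsupp.single P 1)) :
    (∀ y : (res P)ˣ, ∃ f ∈ sectionGroup L O d, evUnit ev P f = y) ∧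
    ∃ ψ : Additive (res P)ˣ →+ K2 F ⧸ Lsub L O d, ∀ f ∈ sectionGroup L O d,
      ψ (Additive.ofMul (evUnit ev P f)) = QuotientAddGroup.mk (symbol f l) := by
  obtain ⟨E, hE0, hEl, hEdeg, hEz, -⟩ := hC.exists_residual_divisor hO hd hP hl
  have hd1 : (t : ℤ) + 1 ≤ d := by
    have : (1 : ℤ) ≤ t := by exact_mod_cast ht
    linarith
  have hPdeg : d < Module.finrank k (res P) + t :=
    not_le.mp fun h => hP (hC.mem_sectionZeros hO h)
  have hOP := hC.ne_of_notMem_sectionZeros hO hd1 hP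
  have hEP := hEz P hP
  have hV0 : Finsupp.single O d P = 0 := Finsupp.single_eq_of_ne' hOP
  have hW0 : (Finsupp.single O d - E) P = 0 := by rw [Finsupp.sub_apply, hV0, hEP, sub_zero]
  have hWV : L (Finsupp.single O d - E) ≤ L (Finsupp.single O d) :=
    hC.L_mono (sub_le_self _ hE0)
  have hVbot : L (Finsupp.single O d - Finsupp.single P 1) = ⊥ := not_not.mp hP
  have hWbot : L (Finsupp.single O d - E - Finsupp.single P 1) = ⊥ := by
    rw [eq_bot_iff, ← hVbot]
    exact hC.L_mono (sub_le_sub_right (sub_le_self _ hE0) _)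
  have := hC.finiteDimensional_res P
  have hVrank : d + 1 - t ≤
      (Module.finrank k (LinearMap.range (hC.evalLin _ P hV0)) : ℤ) := by
    rw [LinearMap.finrank_range_of_inj (hC.evalLin_injective hV0 hVbot)]
    have := hC.rr_ineq (Finsupp.single O d)
    rw [divDeg_single, hO] at this
    push_cast at this
    linarith
  have hWrank : Module.finrank k (res P) - t ≤
      (Module.finrank k (LinearMap.range (hC.evalLin _ P hW0)) : ℤ) := by
    rw [LinearMap.finrank_range_of_inj (hC.evalLin_injective hW0 hWbot)]
    have := hC.rr_ineq (Finsupp.single O d - E)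
    rw [divDeg_sub, divDeg_single, hO, hEdeg] at this
    push_cast at this
    linarith
  have hordV : ∀ {x : Fˣ}, (x : F) ∈ L (Finsupp.single O d) → ord P x = 0 := fun hx =>
    hC.ord_eq_zero_of_mem_sectionGroup hO hd1 hP (Subgroup.subset_closure hx)
  have lift : ∀ {D : Pt →₀ ℤ} (hD : D P = 0), L D ≤ L (Finsupp.single O d) →
      ∀ y : (res P)ˣ, (y : res P) ∈ LinearMap.range (hC.evalLin D P hD) →
        ∃ x : Fˣ, (x : F) ∈ L D ∧ evUnit ev P x = y := by
    rintro D hD hle y ⟨f, hf⟩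
    have hf0 : (f : F) ≠ 0 := by
      intro h0
      apply y.ne_zero
      rw [← hf, Subtype.ext h0 (a2 := (0 : L D)), map_zero]
    refine ⟨Units.mk0 _ hf0, f.2, ?_⟩
    ext
    rw [hC.val_evUnit (hordV (hle f.2))]
    exact hf
  have hexW : ∀ y : (res P)ˣ, ∃ b : Fˣ, (b : F) ∈ L (Finsupp.single O d - E) ∧
      ∃ a : Fˣ, (a : F) ∈ L (Finsupp.single O d - E) ∧
        evUnit ev P a = y * evUnit ev P b := by
    intro y
    obtain ⟨b, hb, hb0, hyb, -⟩ := Submodule.exists_mem_mul_mem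
      (LinearMap.range (hC.evalLin _ P hW0)) (LinearMap.range (hC.evalLin _ P hW0)) ⊤
      y.ne_zero one_ne_zero (by rw [finrank_top]; omega)
    obtain ⟨b', rfl⟩ : ∃ b' : (res P)ˣ, (b' : res P) = b := ⟨Units.mk0 b hb0, rfl⟩
    obtain ⟨x, hx, rfl⟩ := lift hW0 hWV b' hb
    obtain ⟨x', hx', h'⟩ := lift hW0 hWV (y * evUnit ev P x) (by rwa [Units.val_mul])
    exact ⟨x, hx, x', hx', h'⟩
  have hexV : ∀ y z : (res P)ˣ, ∃ b : Fˣ, (b : F) ∈ L (Finsupp.single O d - E) ∧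
      ∃ a : Fˣ, (a : F) ∈ L (Finsupp.single O d) ∧ ∃ c : Fˣ, (c : F) ∈ L (Finsupp.single O d) ∧
        evUnit ev P a = y * evUnit ev P b ∧ evUnit ev P c = z * evUnit ev P b := by
    intro y z
    have hn := divDeg_nonneg (k := k) (res := res) hE0
    obtain ⟨b, hb, hb0, hyb, hzb⟩ := Submodule.exists_mem_mul_mem
      (LinearMap.range (hC.evalLin _ P hW0)) (LinearMap.range (hC.evalLin _ P hV0))
      (LinearMap.range (hC.evalLin _ P hV0)) y.ne_zero z.ne_zero (by omega)
    obtain ⟨b', rfl⟩ : ∃ b' : (res P)ˣ, (b' : res P) = b := ⟨Units.mk0 b hb0, rfl⟩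
    obtain ⟨x, hx, rfl⟩ := lift hW0 hWV b' hb
    obtain ⟨x', hx', h'⟩ := lift hV0 le_rfl (y * evUnit ev P x) (by rwa [Units.val_mul])
    obtain ⟨x'', hx'', h''⟩ := lift hV0 le_rfl (z * evUnit ev P x) (by rwa [Units.val_mul])
    exact ⟨x, hx, x', hx', x'', hx'', h', h''⟩
  refine ⟨fun y => ?_, ?_⟩
  · obtain ⟨b, hb, a, ha, hab⟩ := hexW y
    refine ⟨a * b⁻¹, mul_mem (Subgroup.subset_closure (hWV ha))
      (inv_mem (Subgroup.subset_closure (hWV hb))), ?_⟩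
    have hb1 := hordV (hWV hb)
    rw [hC.evUnit_mul (hordV (hWV ha)) (by rw [hC.ord_units_inv, hb1, neg_zero]),
      hC.evUnit_inv hb1, hab, mul_inv_cancel_right]
  obtain ⟨ψ, hψ⟩ := exists_addMonoidHom_of_fractions
    (V := {x : Fˣ | (x : F) ∈ L (Finsupp.single O d)})
    (W := {x : Fˣ | (x : F) ∈ L (Finsupp.single O d - E)})
    (fun _ hx => hWV hx) (evUnit ev P)
    (fun x => (QuotientAddGroup.mk (symbol x l) : K2 F ⧸ Lsub L O d))
    (fun v hv u hu w hw z hz h => by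
      have key := hC.symbol_mem_Lsub_of_evUnit_eq hOP hE0 hEP hEl hv hu hw hz
        (hordV (hWV hv)) (hordV (hWV hu)) (hordV hw) (hordV hz) h
      rw [symbol_mul_left, symbol_inv_left, symbol_mul_left, symbol_mul_left, add_comm] at key
      rw [← QuotientAddGroup.mk_add, ← QuotientAddGroup.mk_add, QuotientAddGroup.eq]
      exact key) hexW hexV
  refine ⟨ψ, fun f hf => ?_⟩
  have hord := fun {x : Fˣ} (hx : x ∈ sectionGroup L O d) =>
    hC.ord_eq_zero_of_mem_sectionGroup hO hd1 hP hx
  induction hf using Subgroup.closure_induction with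
  | mem f hf =>
    have h1 : ((1 : Fˣ) : F) ∈ L (Finsupp.single O d) := by
      have := hC.algebraMap_mem_L_single (O := O) (d := d) (by omega) 1
      rwa [map_one] at this
    rw [hψ f hf 1 h1 _ (by rw [hC.evUnit_one, mul_one]), symbol_one_left,
      QuotientAddGroup.mk_zero, sub_zero]
  | one => rw [hC.evUnit_one, ofMul_one, map_zero, symbol_one_left, QuotientAddGroup.mk_zero]
  | mul f g hf hg h1 h2 =>
    rw [hC.evUnit_mul (hord hf) (hord hg), ofMul_mul, map_add, h1, h2, symbol_mul_left,
      QuotientAddGroup.mk_add]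
  | inv f hf h =>
    rw [hC.evUnit_inv (hord hf), ofMul_inv, map_neg, h, symbol_inv_left, QuotientAddGroup.mk_neg]

variable {T : K2 F →+ Π₀ P : Pt, Additive ((res P)ˣ)}

theorem tame_symbol_eq_zero (hC : IsProjCurve k F res ord ev L t) (hT : IsTameSymbol ord ev T)
    {P : Pt} {f g : Fˣ} (hf : ord P f = 0) (hg : ord P g = 0) : T (symbol f g) P = 0 := by
  have h := hT f g P
  rw [hf, hg] at h
  simp only [mul_zero, zpow_zero, neg_zero, mul_one, Units.val_one, hC.ev_one] at h
  exact Additive.toMul.injective (Units.ext h)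

theorem tame_symbol_eq_evUnit (hC : IsProjCurve k F res ord ev L t)
    (hT : IsTameSymbol ord ev T) {P : Pt} {f g : Fˣ} (hf : ord P f = 0) (hg : ord P g = 1) :
    T (symbol f g) P = Additive.ofMul (evUnit ev P f) := by
  have h := hT f g P
  rw [hf, hg] at h
  simp only [zpow_zero, zpow_one, neg_zero, mul_one, one_mul] at h
  rw [← hC.val_evUnit hf] at h
  exact Additive.toMul.injective (Units.ext h)

theorem tame_eq_zero_of_mem_Lsub (hC : IsProjCurve k F res ord ev L t)
    (hT : IsTameSymbol ord ev T) (hO : Module.finrank k (res O) = 1) (hd : (t : ℤ) + 1 ≤ d)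
    {P : Pt} (hP : P ∉ sectionZeros L O d) {x : K2 F} (hx : x ∈ Lsub L O d) : T x P = 0 := by
  induction hx using AddSubgroup.closure_induction with
  | mem x hx =>
    obtain ⟨l, m, hl, hm, rfl⟩ := hx
    exact hC.tame_symbol_eq_zero hT
      (hC.ord_eq_zero_of_mem_sectionGroup hO hd hP (Subgroup.subset_closure hl))
      (hC.ord_eq_zero_of_mem_sectionGroup hO hd hP (Subgroup.subset_closure hm))
  | zero => simp
  | add x y _ _ h1 h2 => rw [map_add, DFinsupp.add_apply, h1, h2, add_zero]
  | neg x _ h => rw [map_neg, DFinsupp.neg_apply, h, neg_zero]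

/-- Orders of a section of `(d + 1)(O) - (P)` when no section of `d(O)` vanishes at `P`. -/
theorem ord_of_mem_L_sub_single (hC : IsProjCurve k F res ord ev L t) (ht : 1 ≤ t)
    (hO : Module.finrank k (res O) = 1) (hd : 3 * (t : ℤ) ≤ d) {P : Pt}
    (hP : P ∉ sectionZeros L O d) {l : Fˣ}
    (hl : (l : F) ∈ L (Finsupp.single O (d + 1) - Finsupp.single P 1)) :
    ord P l = 1 ∧ (∀ Q ∉ sectionZeros L O d, Q ≠ P → ord Q l = 0) ∧ ord O l = -(d + 1) := by
  obtain ⟨E, -, hEl, -, hEz, hEO⟩ := hC.exists_residual_divisor hO hd hP hl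
  have hne := fun {Q : Pt} (hQ : Q ∉ sectionZeros L O d) =>
    hC.ne_of_notMem_sectionZeros hO (by omega) hQ
  refine ⟨?_, fun Q hQ hQP => ?_, ?_⟩
  · rw [hEl, hEz P hP, Finsupp.single_eq_same, Finsupp.single_eq_of_ne' (hne hP)]
    norm_num
  · rw [hEl, hEz Q hQ, Finsupp.single_eq_of_ne hQP, Finsupp.single_eq_of_ne' (hne hQ)]
    norm_num
  · rw [hEl, hEO, Finsupp.single_eq_same, Finsupp.single_eq_of_ne (hne hP)]
    ring

/-- The tame symbol detects `Lsub L O d` inside `Lsub L O (d + 1)`. -/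
theorem mem_Lsub_of_mem_Lsub_succ (hC : IsProjCurve k F res ord ev L t)
    (hT : IsTameSymbol ord ev T) (ht : 1 ≤ t) (hO : Module.finrank k (res O) = 1)
    (hd : 3 * (t : ℤ) ≤ d) {x : K2 F} (hx : x ∈ Lsub L O (d + 1))
    (hTx : ∀ P ∉ sectionZeros L O d, T x P = 0) : x ∈ Lsub L O d := by
  classical
  have hd1 : (t : ℤ) + 1 ≤ d := by omega
  have data : ∀ P, ∃ (l : Fˣ) (ψ : Additive (res P)ˣ →+ K2 F ⧸ Lsub L O d),
      (P ∈ sectionZeros L O d → ψ = 0) ∧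
      (P ∉ sectionZeros L O d → P ∈ sectionZeros L O (d + 1) →
        (l : F) ∈ L (Finsupp.single O (d + 1) - Finsupp.single P 1) ∧
        ∀ f ∈ sectionGroup L O d,
          ψ (Additive.ofMul (evUnit ev P f)) = QuotientAddGroup.mk (symbol f l)) := by
    intro P
    by_cases h : P ∉ sectionZeros L O d ∧ P ∈ sectionZeros L O (d + 1)
    · obtain ⟨l, hl⟩ := exists_unit_mem_L h.2
      obtain ⟨-, ψ, hψ⟩ := hC.exists_residue_hom ht hO hd h.1 hl
      exact ⟨l, ψ, fun h' => absurd h' h.1, fun _ _ => ⟨hl, hψ⟩⟩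
    · exact ⟨1, 0, fun _ => rfl, fun h1 h2 => absurd ⟨h1, h2⟩ h⟩
  choose l ψ hψ0 hψ using data
  let Ψ : K2 F →+ K2 F ⧸ Lsub L O d := (DFinsupp.sumAddHom ψ).comp T
  have hΨ : ∀ (y : K2 F) (P : Pt), (∀ Q ∉ sectionZeros L O d, Q ≠ P → T y Q = 0) →
      Ψ y = ψ P (T y P) := by
    intro y P h
    change DFinsupp.sumAddHom ψ (T y) = _
    rw [DFinsupp.sumAddHom_apply, DFinsupp.sum]
    refine Finset.sum_eq_single P (fun Q _ hQP => ?_) fun hP => ?_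
    · by_cases hQ : Q ∈ sectionZeros L O d
      · rw [hψ0 Q hQ, AddMonoidHom.zero_apply]
      · rw [h Q hQ hQP, map_zero]
    · rw [DFinsupp.notMem_support_iff.mp hP, map_zero]
  have hOmem : O ∈ sectionZeros L O d := hC.mem_sectionZeros hO (by rw [hO]; omega)
  have hΨ0 : ∀ y : K2 F, (∀ Q ∉ sectionZeros L O d, T y Q = 0) → Ψ y = 0 := fun y h => by
    rw [hΨ y O fun Q hQ _ => h Q hQ, hψ0 O hOmem, AddMonoidHom.zero_apply]
  let π : K2 F →+ K2 F ⧸ Lsub L O d := QuotientAddGroup.mk' _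
  have hπ : ∀ y ∈ Lsub L O d, y ∈ AddMonoidHom.eqLocus Ψ π := fun y hy => by
    change Ψ y = π y
    rw [hΨ0 y fun Q hQ => hC.tame_eq_zero_of_mem_Lsub hT hO hd1 hQ hy]
    exact ((QuotientAddGroup.eq_zero_iff y).mpr hy).symm
  have hgen : ∀ P ∉ sectionZeros L O d, P ∈ sectionZeros L O (d + 1) →
      ∀ f ∈ sectionGroup L O d, symbol f (l P) ∈ AddMonoidHom.eqLocus Ψ π := by
    intro P hP hP' f hf
    obtain ⟨hl, hl'⟩ := hψ P hP hP'
    obtain ⟨o1, o2, -⟩ := hC.ord_of_mem_L_sub_single ht hO hd hP hl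
    change Ψ _ = π _
    rw [hΨ _ P fun Q hQ hQP => hC.tame_symbol_eq_zero hT
      (hC.ord_eq_zero_of_mem_sectionGroup hO hd1 hQ hf) (o2 Q hQ hQP),
      hC.tame_symbol_eq_evUnit hT (hC.ord_eq_zero_of_mem_sectionGroup hO hd1 hP hf) o1,
      hl' f hf]
    rfl
  have hconst : ∀ c : k, ∀ hc : algebraMap k F c ≠ 0,
      Units.mk0 _ hc ∈ sectionGroup L O d := fun c hc =>
    Subgroup.subset_closure (hC.algebraMap_mem_L_single (by omega) c)
  have hneg : (-1 : Fˣ) ∈ sectionGroup L O d := by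
    have h := hconst (-1) (by simp)
    convert h using 1
    ext
    simp
  have hcases : ∀ m : Fˣ, (m : F) ∈ L (Finsupp.single O (d + 1)) →
      m ∈ sectionGroup L O d ∨ ∃ P ∉ sectionZeros L O d, P ∈ sectionZeros L O (d + 1) ∧
        ∃ c ∈ sectionGroup L O d, m = c * l P := by
    intro m hm
    refine (hC.mem_sectionGroup_or hO hd hm).imp_right ?_
    rintro ⟨P, hP, hmP⟩
    have hP' : P ∈ sectionZeros L O (d + 1) := L_ne_bot hmP
    obtain ⟨hl, -⟩ := hψ P hP hP'
    obtain ⟨-, -, o1⟩ := hC.ord_of_mem_L_sub_single ht hO hd hP hl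
    obtain ⟨-, -, o2⟩ := hC.ord_of_mem_L_sub_single ht hO hd hP hmP
    obtain ⟨c, hc, h⟩ := hC.exists_sub_smul_mem_L hO hmP hl (o2.trans o1.symm)
    rw [sub_right_comm, ← Finsupp.single_sub, add_sub_cancel_right, not_not.mp hP,
      Submodule.mem_bot, sub_eq_zero] at h
    have hc' : algebraMap k F c ≠ 0 := by simpa using hc
    exact ⟨P, hP, hP', Units.mk0 _ hc', hconst c hc', Units.ext h⟩
  have hswap : ∀ {a b : Fˣ}, symbol a b ∈ AddMonoidHom.eqLocus Ψ π →
      symbol b a ∈ AddMonoidHom.eqLocus Ψ π := fun {a b} h => by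
    rw [symbol_swap]
    exact neg_mem h
  have hll : ∀ P ∉ sectionZeros L O d, P ∈ sectionZeros L O (d + 1) →
      ∀ Q ∉ sectionZeros L O d, Q ∈ sectionZeros L O (d + 1) →
      symbol (l P) (l Q) ∈ AddMonoidHom.eqLocus Ψ π := by
    intro P hP hP' Q hQ hQ'
    by_cases hPQ : P = Q
    · subst hPQ
      rw [symbol_self]
      exact neg_mem (hswap (hgen P hP hP' _ hneg))
    obtain ⟨hlP, -⟩ := hψ P hP hP'
    obtain ⟨hlQ, -⟩ := hψ Q hQ hQ'
    obtain ⟨oP, -, oPO⟩ := hC.ord_of_mem_L_sub_single ht hO hd hP hlP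
    obtain ⟨-, oQ, oQO⟩ := hC.ord_of_mem_L_sub_single ht hO hd hQ hlQ
    have hle : ∀ R : Pt, Finsupp.single O (d + 1) - Finsupp.single R 1 ≤
        Finsupp.single O (d + 1) :=
      fun R => sub_le_self _ (Finsupp.single_nonneg.mpr zero_le_one)
    obtain ⟨c, hc, h⟩ := hC.exists_sub_smul_mem_L hO (hC.L_mono (hle P) hlP)
      (hC.L_mono (hle Q) hlQ) (oPO.trans oQO.symm)
    rw [← Finsupp.single_sub, add_sub_cancel_right] at h
    have hc' : algebraMap k F c ≠ 0 := by simpa using hc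
    have hr0 : (l P : F) - algebraMap k F c * l Q ≠ 0 := by
      intro h0
      have h1 := hC.ord_mul P _ _ hc' (l Q).ne_zero
      rw [← sub_eq_zero.mp h0, oP, hC.ord_algebraMap P c hc, oQ P hP hPQ] at h1
      omega
    have hr : Units.mk0 _ hr0 ∈ sectionGroup L O d := Subgroup.subset_closure h
    have ha : -1 * Units.mk0 _ hc' * (Units.mk0 _ hr0)⁻¹ ∈ sectionGroup L O d :=
      mul_mem (mul_mem hneg (hconst c hc')) (inv_mem hr)
    refine symbol_mem_of_add_eq_one (hπ _ (symbol_mem_Lsub (inv_mem hr) ha))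
      (hgen Q hQ hQ' _ (inv_mem hr)) (hswap (hgen P hP hP' _ ha)) ?_
    simp only [Units.val_mul, Units.val_neg, Units.val_one, Units.val_inv_eq_inv_val,
      Units.val_mk0]
    field_simp
    ring
  have hle : Lsub L O (d + 1) ≤ AddMonoidHom.eqLocus Ψ π := by
    refine (AddSubgroup.closure_le _).mpr ?_
    rintro _ ⟨m, n, hm, hn, rfl⟩
    rcases hcases m hm with hm | ⟨P, hP, hP', a, ha, rfl⟩ <;>
      rcases hcases n hn with hn | ⟨Q, hQ, hQ', b, hb, rfl⟩
    · exact hπ _ (symbol_mem_Lsub hm hn)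
    · rw [symbol_mul_right]
      exact add_mem (hπ _ (symbol_mem_Lsub hm hb)) (hgen Q hQ hQ' m hm)
    · rw [symbol_mul_left]
      exact add_mem (hπ _ (symbol_mem_Lsub ha hn)) (hswap (hgen P hP hP' n hn))
    · rw [symbol_mul_left, symbol_mul_right, symbol_mul_right]
      exact add_mem (add_mem (hπ _ (symbol_mem_Lsub ha hb)) (hgen Q hQ hQ' a ha))
        (add_mem (hswap (hgen P hP hP' b hb)) (hll P hP hP' Q hQ hQ'))
  have h : Ψ x = π x := hle hx
  rw [hΨ0 x hTx] at h
  exact (QuotientAddGroup.eq_zero_iff x).mp h.symm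

theorem exists_mem_sectionGroup (hC : IsProjCurve k F res ord ev L t)
    (hO : Module.finrank k (res O) = 1) (u : Fˣ) : ∃ n : ℕ, u ∈ sectionGroup L O n := by
  obtain ⟨D, hD, -⟩ := hC.exists_divisor u
  have hneg : 0 ≤ D⁻ := negPart_nonneg D
  obtain ⟨h, hh⟩ := exists_unit_mem_L
    (hC.L_ne_bot_of_le_divDeg (D := Finsupp.single O (((divDeg k res D⁻).toNat + t : ℕ) : ℤ) - D⁻)
      (by
        rw [divDeg_sub, divDeg_single, hO]
        have := Int.self_le_toNat (divDeg k res D⁻)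
        push_cast at this ⊢
        linarith))
  refine ⟨(divDeg k res D⁻).toNat + t, ?_⟩
  have huh : ((u * h : Fˣ) : F) ∈ L (Finsupp.single O (((divDeg k res D⁻).toNat + t : ℕ) : ℤ)) := by
    rw [hC.units_mem_L] at hh ⊢
    intro Q
    have h1 := hh Q
    have h2 : (-D) Q ≤ D⁻ Q := neg_le_negPart D Q
    rw [hC.ord_units_mul, ← hD]
    rw [Finsupp.sub_apply] at h1
    rw [Finsupp.neg_apply] at h2
    linarith
  rw [show u = u * h * h⁻¹ by group]
  exact mul_mem (Subgroup.subset_closure huh)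
    (inv_mem (Subgroup.subset_closure (hC.L_mono (sub_le_self _ hneg) hh)))

theorem exists_mem_Lsub (hC : IsProjCurve k F res ord ev L t)
    (hO : Module.finrank k (res O) = 1) (x : K2 F) : ∃ n : ℕ, x ∈ Lsub L O n := by
  obtain ⟨y, rfl⟩ := Submodule.Quotient.mk_surjective _ x
  induction y with
  | zero => exact ⟨0, zero_mem _⟩
  | tmul a b =>
    obtain ⟨m, hm⟩ := hC.exists_mem_sectionGroup hO a.toMul
    obtain ⟨n, hn⟩ := hC.exists_mem_sectionGroup hO b.toMul
    exact ⟨max m n, symbol_mem_Lsub (hC.sectionGroup_mono (by simp) hm)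
      (hC.sectionGroup_mono (by simp) hn)⟩
  | add a b ha hb =>
    obtain ⟨m, hm⟩ := ha
    obtain ⟨n, hn⟩ := hb
    exact ⟨max m n, add_mem (hC.Lsub_mono (by simp) hm) (hC.Lsub_mono (by simp) hn)⟩

theorem mem_Lsub_of_tame_eq_zero (hC : IsProjCurve k F res ord ev L t)
    (hT : IsTameSymbol ord ev T) (ht : 1 ≤ t) (hO : Module.finrank k (res O) = 1) {x : K2 F}
    (hTx : ∀ P ∉ sectionZeros L O (3 * t : ℤ), T x P = 0) : x ∈ Lsub L O (3 * t : ℤ) := by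
  obtain ⟨n, hn⟩ := hC.exists_mem_Lsub hO x
  have hn' : x ∈ Lsub L O (3 * t + n : ℤ) := hC.Lsub_mono (by omega) hn
  clear hn
  induction n with
  | zero => simpa using hn'
  | succ n ih =>
    refine ih (hC.mem_Lsub_of_mem_Lsub_succ hT ht hO (by omega) ?_ fun P hP =>
      hTx P fun h => hP (hC.sectionZeros_mono (by omega) h))
    rwa [add_assoc]

/-- The tame symbol is surjective onto the components outside `sectionZeros L O (3 * t)`. -/
theorem exists_tame_eq (hC : IsProjCurve k F res ord ev L t) (hT : IsTameSymbol ord ev T)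
    (ht : 1 ≤ t) (hO : Module.finrank k (res O) = 1) (n : ℕ) :
    ∀ y : Π₀ P : Pt, Additive ((res P)ˣ), (∀ P ∉ sectionZeros L O (3 * t + n : ℤ), y P = 0) →
      ∃ x : K2 F, ∀ P ∉ sectionZeros L O (3 * t : ℤ), T x P = y P := by
  classical
  induction n with
  | zero => exact fun y hy => ⟨0, fun P hP => by rw [hy P (by simpa using hP)]; simp⟩
  | succ n ih =>
    intro y hy
    have hd : (3 * t : ℤ) ≤ 3 * t + n := by omega
    have local_lift : ∀ P, ∃ x : K2 F, (∀ Q ∉ sectionZeros L O (3 * t + n : ℤ), Q ≠ P →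
        T x Q = 0) ∧ (P ∉ sectionZeros L O (3 * t + n : ℤ) → T x P = y P) := by
      intro P
      by_cases h : P ∉ sectionZeros L O (3 * t + n : ℤ) ∧
          P ∈ sectionZeros L O (3 * t + n + 1 : ℤ)
      · obtain ⟨l, hl⟩ := exists_unit_mem_L h.2
        obtain ⟨f, hf, hfy⟩ := (hC.exists_residue_hom ht hO hd h.1 hl).1 (y P).toMul
        obtain ⟨o1, o2, -⟩ := hC.ord_of_mem_L_sub_single ht hO hd h.1 hl
        refine ⟨symbol f l, fun Q hQ hQP => hC.tame_symbol_eq_zero hT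
          (hC.ord_eq_zero_of_mem_sectionGroup hO (by omega) hQ hf) (o2 Q hQ hQP), fun _ => ?_⟩
        rw [hC.tame_symbol_eq_evUnit hT
          (hC.ord_eq_zero_of_mem_sectionGroup hO (by omega) h.1 hf) o1, hfy, ofMul_toMul]
      · refine ⟨0, fun Q _ _ => by simp, fun hP => ?_⟩
        have hP' : P ∉ sectionZeros L O (3 * t + n + 1 : ℤ) := fun h' => h ⟨hP, h'⟩
        rw [hy P (by push_cast; rwa [← add_assoc]), map_zero, DFinsupp.zero_apply]
    choose z hz hz' using local_lift
    obtain ⟨x, hx⟩ := ih (y - T (∑ P ∈ y.support, z P)) fun P hP => by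
      rw [DFinsupp.sub_apply, map_sum, DFinsupp.finsetSum_apply, sub_eq_zero,
        Finset.sum_eq_single P (fun Q _ hQP => hz Q P hP hQP.symm)
        (fun h => (hz' P hP).trans (DFinsupp.notMem_support_iff.mp h)), hz' P hP]
    refine ⟨x + ∑ P ∈ y.support, z P, fun P hP => ?_⟩
    rw [map_add, DFinsupp.add_apply, hx P hP, DFinsupp.sub_apply, sub_add_cancel]

theorem exists_support_subset_sectionZeros (hC : IsProjCurve k F res ord ev L t)
    (hO : Module.finrank k (res O) = 1) (y : Π₀ P : Pt, Additive ((res P)ˣ)) :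
    ∃ n : ℕ, ∀ P ∉ sectionZeros L O (3 * t + n : ℤ), y P = 0 := by
  classical
  refine ⟨y.support.sup fun P => Module.finrank k (res P), fun P hP => ?_⟩
  by_contra h
  refine hP (hC.mem_sectionZeros hO ?_)
  have := Finset.le_sup (f := fun P => Module.finrank k (res P)) (DFinsupp.mem_support_iff.mpr h)
  omega

end IsProjCurve

/-- Theorem `introker2`.  Let `C` be a regular, irreducible curve,
projective over `k`, with function field `F`, arithmetic genus `t ≥ 1` and a
`k`-rational point `O`.  Let `S = {P : H⁰(C, O_C(3t(O) - (P))) ≠ 0}` and let `L_{3t}`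
be generated by the symbols of nonzero elements of `H⁰(C, O_C(3t(O)))`.  Then the tame
symbol induces an isomorphism `K₂(F) / L_{3t} ≅ ∐_{P ∉ S} k(P)^*` (expressed by (i)
surjectivity and (ii) the kernel being `L_{3t}`); in particular (iii) the kernel of
`T` equals the kernel of its restriction to `L_{3t}`, (iv) this restriction is
supported in `S`, and (v) & (vi) the inclusion induces a bijection between the two
cokernels. -/
theorem statement5 (k F : Type*) [Field k] [Field F] [Algebra k F]
    {Pt : Type*} (res : Pt → Type*) [∀ P, Field (res P)] [∀ P, Algebra k (res P)]
    (ord : Pt → F → ℤ) (ev : ∀ P, F → res P)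
    (L : (Pt →₀ ℤ) → Submodule k F) (t : ℕ) (ht : 1 ≤ t)
    (hC : IsProjCurve k F res ord ev L t)
    (O : Pt) (hO : Module.finrank k (res O) = 1)
    (T : K2 F →+ Π₀ P : Pt, Additive ((res P)ˣ)) (hT : IsTameSymbol ord ev T)
    (S : Set Pt)
    (hS : S = {P | L (Finsupp.single O (3 * t : ℤ) - Finsupp.single P 1) ≠ ⊥}) :
    -- (i) the induced map `K₂(F) → ∐_{P ∉ S} k(P)^*` is surjective:
    (∀ y : Π₀ P : Pt, Additive ((res P)ˣ),
      ∃ x : K2 F, ∀ P ∉ S, T x P = y P) ∧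
    -- (ii) its kernel is exactly `L_{3t}`:
    (∀ x : K2 F, ((∀ P ∉ S, T x P = 0) ↔ x ∈ Lsub L O (3 * t : ℤ))) ∧
    -- (iii) the kernel of the tame symbol equals that of its restriction to `L_{3t}`:
    (∀ x : K2 F, T x = 0 → x ∈ Lsub L O (3 * t : ℤ)) ∧
    -- (iv) the restriction of `T` to `L_{3t}` lands in `∐_{P ∈ S} k(P)^*`:
    (∀ x ∈ Lsub L O (3 * t : ℤ), ∀ P ∉ S, T x P = 0) ∧
    -- (v) the induced map between the two cokernels is injective:
    (∀ y : Π₀ P : Pt, Additive ((res P)ˣ), (∀ P ∉ S, y P = 0) →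
      (∃ x : K2 F, T x = y) → ∃ x ∈ Lsub L O (3 * t : ℤ), T x = y) ∧
    -- (vi) the induced map between the two cokernels is surjective:
    (∀ y : Π₀ P : Pt, Additive ((res P)ˣ),
      ∃ x : K2 F, ∀ P ∉ S, (y - T x) P = 0) := by
  subst hS
  have hd : (t : ℤ) + 1 ≤ 3 * t := by omega
  have hker : ∀ x : K2 F, (∀ P ∉ sectionZeros L O (3 * t : ℤ), T x P = 0) →
      x ∈ Lsub L O (3 * t : ℤ) := fun x hx => hC.mem_Lsub_of_tame_eq_zero hT ht hO hx
  have hsupp : ∀ x ∈ Lsub L O (3 * t : ℤ), ∀ P ∉ sectionZeros L O (3 * t : ℤ), T x P = 0 :=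
    fun x hx P hP => hC.tame_eq_zero_of_mem_Lsub hT hO hd hP hx
  have hsurj : ∀ y : Π₀ P : Pt, Additive ((res P)ˣ),
      ∃ x : K2 F, ∀ P ∉ sectionZeros L O (3 * t : ℤ), T x P = y P := fun y => by
    obtain ⟨n, hn⟩ := hC.exists_support_subset_sectionZeros hO y
    exact hC.exists_tame_eq hT ht hO n y hn
  refine ⟨hsurj, fun x => ⟨hker x, hsupp x⟩, fun x hx => hker x fun P _ => by simp [hx], hsupp,
    fun y hy => ?_, fun y => ?_⟩
  · rintro ⟨x, rfl⟩
    exact ⟨x, hker x hy, rfl⟩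
  · obtain ⟨x, hx⟩ := hsurj y
    exact ⟨x, fun P hP => by rw [DFinsupp.sub_apply, hx P hP, sub_self]⟩

end
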